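/- arXiv:math/0302283 — 3 statements merged into one kernel-verified Lean document; each statement's English description precedes it below -/
import Mathlib

section
/- Let Z be a nonempty topological space. The points ⊥ and ⊤ are closed in Glob^top(Z), the set Glob^top(Z) ∖ {⊥, ⊤} is open, and the quotient map q restricts to a homeomorphism from Z × (0,1) onto the open subspace Glob^top(Z) ∖ {⊥, ⊤}. -/
/-- The smallest equivalence relation on `Z × [0,1]` identifying `(z,0)` with `(z',0)`
and `(z,1)` with `(z',1)` for all `z, z'`. -/
def globSetoid (Z : Type) [TopologicalSpace Z] : Setoid (Z × unitInterval) where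
  r a b := a = b ∨ (a.2 = 0 ∧ b.2 = 0) ∨ (a.2 = 1 ∧ b.2 = 1)
  iseqv := by
    constructor
    · exact fun a => Or.inl rfl
    · rintro a b (rfl | ⟨h1, h2⟩ | ⟨h1, h2⟩)
      · exact Or.inl rfl
      · exact Or.inr (Or.inl ⟨h2, h1⟩)
      · exact Or.inr (Or.inr ⟨h2, h1⟩)
    · rintro a b c (rfl | ⟨h1, h2⟩ | ⟨h1, h2⟩) (rfl | ⟨h3, h4⟩ | ⟨h3, h4⟩) <;>
        simp_all

/-- The globe `Glob^top(Z)`: the quotient of `Z × [0,1]` collapsing `Z × {0}` to a point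
and `Z × {1}` to a point. -/
def GlobTop (Z : Type) [TopologicalSpace Z] : Type := Quotient (globSetoid Z)

/-- The quotient map `q : Z × [0,1] → Glob^top(Z)`. -/
def globQ (Z : Type) [TopologicalSpace Z] : Z × unitInterval → GlobTop Z :=
  Quotient.mk (globSetoid Z)

/-- `Glob^top(Z)` carries the quotient topology. -/
instance (Z : Type) [TopologicalSpace Z] : TopologicalSpace (GlobTop Z) :=
  TopologicalSpace.coinduced (globQ Z) inferInstance

/-- The bottom point `⊥` of `Glob^top(Z)`, the common class of the points `(z,0)`. -/
noncomputable def globBot (Z : Type) [TopologicalSpace Z] [Nonempty Z] : GlobTop Z :=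
  globQ Z (Classical.arbitrary Z, 0)

/-- The top point `⊤` of `Glob^top(Z)`, the common class of the points `(z,1)`. -/
noncomputable def globTop (Z : Type) [TopologicalSpace Z] [Nonempty Z] : GlobTop Z :=
  globQ Z (Classical.arbitrary Z, 1)

/-! A point of `Z × (0,1)` is alone in its class, so every open subset of `Z × (0,1)` is a saturated
open subset of `Z × [0,1]`, and `q` maps it to an open subset of the quotient. Likewise `⊥` and `⊤`
are closed because the corresponding classes `Z × {0}` and `Z × {1}` are closed. -/

theorem isOpenEmbedding_comp_of_isQuotientMap {W X Y : Type*} [TopologicalSpace W]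
    [TopologicalSpace X] [TopologicalSpace Y] {f : X → Y} {g : W → X}
    (hf : Topology.IsQuotientMap f) (hg : Topology.IsOpenEmbedding g)
    (hfib : ∀ w x, f (g w) = f x → g w = x) : Topology.IsOpenEmbedding (f ∘ g) := by
  refine .of_continuous_injective_isOpenMap (hf.continuous.comp hg.continuous)
    (fun w w' h ↦ hg.injective (hfib w (g w') h)) fun U hU ↦ ?_
  have saturated : f ⁻¹' ((f ∘ g) '' U) = g '' U := by
    ext x
    constructor
    · rintro ⟨w, hw, h⟩
      exact ⟨w, hw, hfib w x h⟩
    · rintro ⟨w, hw, rfl⟩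
      exact ⟨w, hw, rfl⟩
  rw [← hf.isOpen_preimage, saturated]
  exact hg.isOpenMap U hU

section Globe

variable {Z : Type} [TopologicalSpace Z]

theorem globQ_eq_globQ_iff {a b : Z × unitInterval} :
    globQ Z a = globQ Z b ↔ a = b ∨ (a.2 = 0 ∧ b.2 = 0) ∨ (a.2 = 1 ∧ b.2 = 1) :=
  Quotient.eq (r := globSetoid Z)

theorem globQ_eq_globQ_iff_of_mem_Ioo {a b : Z × unitInterval} (ha : a.2 ∈ Set.Ioo 0 1) :
    globQ Z a = globQ Z b ↔ a = b := by
  simp [globQ_eq_globQ_iff, ha.1.ne', ha.2.ne]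

theorem isQuotientMap_globQ : Topology.IsQuotientMap (globQ Z) :=
  ⟨⟨rfl⟩, Quotient.mk_surjective⟩

theorem isOpenEmbedding_globQ_comp_prodMap_val :
    Topology.IsOpenEmbedding
      (globQ Z ∘ Prod.map id (Subtype.val : Set.Ioo (0 : unitInterval) 1 → unitInterval)) :=
  isOpenEmbedding_comp_of_isQuotientMap isQuotientMap_globQ
    (.prodMap .id isOpen_Ioo.isOpenEmbedding_subtypeVal)
    fun p _ ↦ (globQ_eq_globQ_iff_of_mem_Ioo p.2.2).mp

variable [Nonempty Z]

theorem globQ_eq_globBot_iff {a : Z × unitInterval} : globQ Z a = globBot Z ↔ a.2 = 0 := by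
  simp +contextual [globBot, globQ_eq_globQ_iff, Prod.ext_iff]

theorem globQ_eq_globTop_iff {a : Z × unitInterval} : globQ Z a = globTop Z ↔ a.2 = 1 := by
  simp +contextual [globTop, globQ_eq_globQ_iff, Prod.ext_iff]

theorem isClosed_singleton_globBot : IsClosed ({globBot Z} : Set (GlobTop Z)) := by
  have fiber : globQ Z ⁻¹' {globBot Z} = Prod.snd ⁻¹' {0} :=
    Set.ext fun _ ↦ globQ_eq_globBot_iff
  rw [← isQuotientMap_globQ.isClosed_preimage, fiber]
  exact isClosed_singleton.preimage continuous_snd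

theorem isClosed_singleton_globTop : IsClosed ({globTop Z} : Set (GlobTop Z)) := by
  have fiber : globQ Z ⁻¹' {globTop Z} = Prod.snd ⁻¹' {1} :=
    Set.ext fun _ ↦ globQ_eq_globTop_iff
  rw [← isQuotientMap_globQ.isClosed_preimage, fiber]
  exact isClosed_singleton.preimage continuous_snd

theorem preimage_globQ_ne_globBot_and_ne_globTop :
    globQ Z ⁻¹' {x | x ≠ globBot Z ∧ x ≠ globTop Z} = Set.univ ×ˢ Set.Ioo 0 1 := by
  ext a
  simp [globQ_eq_globBot_iff, globQ_eq_globTop_iff, unitInterval.pos_iff_ne_zero,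
    unitInterval.lt_one_iff_ne_one]

theorem range_globQ_comp_prodMap_val :
    Set.range
      (globQ Z ∘ Prod.map id (Subtype.val : Set.Ioo (0 : unitInterval) 1 → unitInterval)) =
      {x | x ≠ globBot Z ∧ x ≠ globTop Z} := by
  rw [Set.range_comp, Set.range_prodMap, Set.range_id, Subtype.range_coe,
    ← preimage_globQ_ne_globBot_and_ne_globTop,
    Set.image_preimage_eq _ isQuotientMap_globQ.surjective]

end Globe

/-- for `Z` nonempty, `⊥` and `⊤` are closed points of `Glob^top(Z)`,
the complement `Glob^top(Z) ∖ {⊥, ⊤}` is open, and `q` restricts to a homeomorphism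
(an open embedding) from `Z × (0,1)` onto this open subspace. -/
theorem globTop_minus_endpoints (Z : Type) [TopologicalSpace Z] [Nonempty Z] :
    IsClosed ({globBot Z} : Set (GlobTop Z)) ∧
    IsClosed ({globTop Z} : Set (GlobTop Z)) ∧
    IsOpen {x : GlobTop Z | x ≠ globBot Z ∧ x ≠ globTop Z} ∧
    Topology.IsOpenEmbedding
      (fun p : Z × (Set.Ioo (0 : unitInterval) 1) => globQ Z (p.1, p.2.1)) ∧
    Set.range (fun p : Z × (Set.Ioo (0 : unitInterval) 1) => globQ Z (p.1, p.2.1)) =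
      {x : GlobTop Z | x ≠ globBot Z ∧ x ≠ globTop Z} :=
  ⟨isClosed_singleton_globBot, isClosed_singleton_globTop,
    isClosed_singleton_globBot.isOpen_compl.inter isClosed_singleton_globTop.isOpen_compl,
    isOpenEmbedding_globQ_comp_prodMap_val, range_globQ_comp_prodMap_val⟩
end

section
/- Through every point of Glob^top(Z) other than ⊥ and ⊤ there passes exactly one non-constant execution path up to reparametrization. Precisely: let Z be a nonempty topological space and let γ : [0,1] → Glob^top(Z) be a continuous map with γ(0) = ⊥, γ(1) = ⊤, which is monotone for the partial order of Glob^top(Z) (u ≤ v implies γ(u) ≤ γ(v)). Then there exist a unique z ∈ Z and a unique continuous nondecreasing map φ : [0,1] → [0,1] with φ(0) = 0 and φ(1) = 1 such that γ(u) = q(z, φ(u)) for all u ∈ [0,1]. -/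
/-- The relation on representatives defining the partial order of `Glob^top(Z)`:
`(z,t) ≤ (z',t')` iff `t = 0`, or `t' = 1`, or (`z = z'` and `t ≤ t'`). -/
def globLE' (Z : Type) [TopologicalSpace Z] (a b : Z × unitInterval) : Prop :=
  a.2 = 0 ∨ b.2 = 1 ∨ (a.1 = b.1 ∧ a.2 ≤ b.2)

/-- The partial order of `Glob^top(Z)`, defined via representatives. -/
def globLE (Z : Type) [TopologicalSpace Z] (x y : GlobTop Z) : Prop :=
  ∃ a b : Z × unitInterval, globQ Z a = x ∧ globQ Z b = y ∧ globLE' Z a b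

/-!
A monotone path from `⊥` to `⊤` has continuous height, hence meets some point `q(z, t)` with
`0 < t < 1`. The whole path is comparable with that point, and everything comparable with it lies
on the fibre `{z} × [0,1]`. On this fibre the path is determined by its height, which is
therefore the only possible `φ`.
-/

open Set

namespace GlobTop

variable {Z : Type} [TopologicalSpace Z]

theorem globQ_eq_globQ_iff {a b : Z × unitInterval} :
    globQ Z a = globQ Z b ↔ a = b ∨ (a.2 = 0 ∧ b.2 = 0) ∨ (a.2 = 1 ∧ b.2 = 1) :=
  Quotient.eq (r := globSetoid Z)

theorem globQ_surjective : Function.Surjective (globQ Z) :=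
  Quotient.mk_surjective

theorem eq_of_globQ_eq_of_snd_mem_Ioo {a b : Z × unitInterval} (h : globQ Z a = globQ Z b)
    (hb : b.2 ∈ Ioo 0 1) : a = b := by
  rcases globQ_eq_globQ_iff.1 h with h | ⟨-, h⟩ | ⟨-, h⟩
  · exact h
  · exact absurd h hb.1.ne'
  · exact absurd h hb.2.ne

/-- The height `q(z, t) ↦ t`, the projection of `Glob^top(Z)` onto `[0,1]`; it recovers the
parametrization `φ` of a path `u ↦ q(z, φ(u))`. -/
def height : GlobTop Z → unitInterval :=
  Quotient.lift Prod.snd <| by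
    rintro a b (rfl | ⟨ha, hb⟩ | ⟨ha, hb⟩)
    · rfl
    · exact ha.trans hb.symm
    · exact ha.trans hb.symm

@[simp]
theorem height_globQ (a : Z × unitInterval) : height (globQ Z a) = a.2 := rfl

@[simp]
theorem height_globBot [Nonempty Z] : height (globBot Z) = 0 := rfl

@[simp]
theorem height_globTop [Nonempty Z] : height (globTop Z) = 1 := rfl

theorem continuous_height : Continuous (height : GlobTop Z → unitInterval) :=
  continuous_coinduced_dom.2 continuous_snd

theorem height_le_height {x y : GlobTop Z} (h : globLE Z x y) : height x ≤ height y := by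
  obtain ⟨a, b, rfl, rfl, ha | hb | ⟨-, hab⟩⟩ := h
  · simp [ha]
  · simp [hb, unitInterval.le_one']
  · exact hab

theorem eq_globQ_height_of_globLE {x : GlobTop Z} {z : Z} {t : unitInterval} (ht : t ∈ Ioo 0 1)
    (h : globLE Z x (globQ Z (z, t))) : x = globQ Z (z, height x) := by
  obtain ⟨a, b, rfl, hb, hab⟩ := h
  obtain rfl := eq_of_globQ_eq_of_snd_mem_Ioo hb ht
  rcases hab with ha | ht' | ⟨rfl, -⟩
  · exact globQ_eq_globQ_iff.2 (.inr (.inl ⟨ha, ha⟩))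
  · exact absurd ht' ht.2.ne
  · rfl

theorem eq_globQ_height_of_globQ_globLE {x : GlobTop Z} {z : Z} {t : unitInterval}
    (ht : t ∈ Ioo 0 1) (h : globLE Z (globQ Z (z, t)) x) : x = globQ Z (z, height x) := by
  obtain ⟨a, b, ha, rfl, hab⟩ := h
  obtain rfl := eq_of_globQ_eq_of_snd_mem_Ioo ha ht
  rcases hab with ht' | hb | ⟨rfl, -⟩
  · exact absurd ht' ht.1.ne'
  · exact globQ_eq_globQ_iff.2 (.inr (.inr ⟨hb, hb⟩))
  · rfl

theorem existsUnique_forall_eq_globQ_height {ι : Type*} {γ : ι → GlobTop Z} {w : ι}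
    (hw : height (γ w) ∈ Ioo 0 1)
    (hcomp : ∀ u, globLE Z (γ u) (γ w) ∨ globLE Z (γ w) (γ u)) :
    ∃! z, ∀ u, γ u = globQ Z (z, height (γ u)) := by
  obtain ⟨⟨z, t⟩, hzt⟩ := globQ_surjective (γ w)
  rw [← hzt] at hw hcomp
  refine ⟨z, fun u => (hcomp u).elim (eq_globQ_height_of_globLE hw)
    (eq_globQ_height_of_globQ_globLE hw), fun z' hz' => ?_⟩
  have hfibre : globQ Z (z', height (γ w)) = globQ Z (z, t) := (hz' w).symm.trans hzt.symm
  exact congrArg Prod.fst (eq_of_globQ_eq_of_snd_mem_Ioo hfibre hw)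

theorem height_comp_surjective [Nonempty Z] {α : Type*} [TopologicalSpace α]
    [PreconnectedSpace α] {γ : α → GlobTop Z} (hγ : Continuous γ) {a b : α}
    (ha : γ a = globBot Z) (hb : γ b = globTop Z) : Function.Surjective (height ∘ γ) := fun _ =>
  mem_range_of_exists_le_of_exists_ge (continuous_height.comp hγ)
    ⟨a, by simp [ha]⟩ ⟨b, by simp [hb, unitInterval.le_one']⟩

end GlobTop

open GlobTop in
theorem execution_path_unique_general {Z : Type} [TopologicalSpace Z] [Nonempty Z]
    {α : Type*} [TopologicalSpace α] [PreconnectedSpace α] [LinearOrder α]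
    {γ : α → GlobTop Z} (hγ : Continuous γ) {a b : α}
    (ha : γ a = globBot Z) (hb : γ b = globTop Z)
    (hmono : ∀ u v : α, u ≤ v → globLE Z (γ u) (γ v)) :
    ∃! p : Z × (α → unitInterval),
      Continuous p.2 ∧ Monotone p.2 ∧ p.2 a = 0 ∧ p.2 b = 1 ∧
        ∀ u : α, γ u = globQ Z (p.1, p.2 u) := by
  obtain ⟨t, ht⟩ : ∃ t : unitInterval, t ∈ Ioo 0 1 := exists_between zero_lt_one
  obtain ⟨w, rfl⟩ := height_comp_surjective hγ ha hb t
  obtain ⟨z, hz, hz_unique⟩ := existsUnique_forall_eq_globQ_height ht fun u =>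
    (le_total u w).imp (hmono u w) (hmono w u)
  refine ⟨(z, height ∘ γ), ⟨continuous_height.comp hγ, fun u v huv =>
    height_le_height (hmono u v huv), by simp [ha], by simp [hb], hz⟩, ?_⟩
  rintro ⟨z', φ⟩ ⟨-, -, -, -, hφ⟩
  obtain rfl : φ = height ∘ γ := funext fun u => (congrArg height (hφ u)).symm
  rw [hz_unique z' hφ]

/-- through every point of `Glob^top(Z)` other than `⊥` and `⊤` passes exactly
one non-constant execution path up to reparametrization: every continuous monotone
`γ : [0,1] → Glob^top(Z)` with `γ(0) = ⊥` and `γ(1) = ⊤` is of the form `γ(u) = q(z, φ(u))`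
for a unique `z ∈ Z` and a unique continuous nondecreasing `φ : [0,1] → [0,1]` with
`φ(0) = 0` and `φ(1) = 1`. -/
theorem execution_path_unique (Z : Type) [TopologicalSpace Z] [Nonempty Z]
    (γ : unitInterval → GlobTop Z) (hγ : Continuous γ)
    (h0 : γ 0 = globBot Z) (h1 : γ 1 = globTop Z)
    (hmono : ∀ u v : unitInterval, u ≤ v → globLE Z (γ u) (γ v)) :
    ∃! p : Z × (unitInterval → unitInterval),
      Continuous p.2 ∧ Monotone p.2 ∧ p.2 0 = 0 ∧ p.2 1 = 1 ∧
        ∀ u : unitInterval, γ u = globQ Z (p.1, p.2 u) :=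
  execution_path_unique_general hγ h0 h1 hmono
end

section
/- Let Z be a topological space and A ⊆ Z a nonempty closed subspace. Then the continuous map Glob^top(A) → Glob^top(Z) induced by the inclusion A ↪ Z is a closed topological embedding. -/
/-- The map `Glob^top(A) → Glob^top(Z)` induced by the inclusion of a subspace `A ⊆ Z`:
it sends the class of `(a,t)` to the class of `(a,t)`. -/
def globIncl (Z : Type) [TopologicalSpace Z] (A : Set Z) : GlobTop ↥A → GlobTop Z :=
  Quotient.lift (fun p : ↥A × unitInterval => globQ Z ((p.1 : Z), p.2))
    (by
      rintro ⟨a, t⟩ ⟨b, u⟩ (h | ⟨h1, h2⟩ | ⟨h1, h2⟩)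
      · rw [h]
      · exact Quotient.sound (Or.inr (Or.inl ⟨h1, h2⟩))
      · exact Quotient.sound (Or.inr (Or.inr ⟨h1, h2⟩)))

/-!
The quotient map `q : Z × [0,1] → Glob^top(Z)` is closed: saturating a closed set adds at most
the two closed ends `Z × {0}` and `Z × {1}`. Since `Glob^top(A) → Glob^top(Z)` composed with the
surjection `A × [0,1] → Glob^top(A)` is `A × [0,1] → Z × [0,1]` followed by `q`, it is closed
whenever `A` is.
-/

section Globe

variable {Z : Type} [TopologicalSpace Z]

theorem globQ_eq_globQ_iff_s8 {p r : Z × unitInterval} :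
    globQ Z p = globQ Z r ↔ p = r ∨ (p.2 = 0 ∧ r.2 = 0) ∨ (p.2 = 1 ∧ r.2 = 1) :=
  Quotient.eq (r := globSetoid Z)

theorem globQ_preimage_image (C : Set (Z × unitInterval)) :
    globQ Z ⁻¹' (globQ Z '' C) =
      C ∪ ({p | p.2 = 0 ∧ ∃ c ∈ C, c.2 = 0} ∪ {p | p.2 = 1 ∧ ∃ c ∈ C, c.2 = 1}) := by
  ext p
  simp only [Set.mem_preimage, Set.mem_image, globQ_eq_globQ_iff_s8, Set.mem_union,
    Set.mem_ofPred_eq]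
  constructor
  · rintro ⟨c, hc, rfl | ⟨hc₀, hp₀⟩ | ⟨hc₁, hp₁⟩⟩
    · exact .inl hc
    · exact .inr (.inl ⟨hp₀, c, hc, hc₀⟩)
    · exact .inr (.inr ⟨hp₁, c, hc, hc₁⟩)
  · rintro (hp | ⟨hp₀, c, hc, hc₀⟩ | ⟨hp₁, c, hc, hc₁⟩)
    · exact ⟨p, hp, .inl rfl⟩
    · exact ⟨c, hc, .inr (.inl ⟨hc₀, hp₀⟩)⟩
    · exact ⟨c, hc, .inr (.inr ⟨hc₁, hp₁⟩)⟩

theorem isClosedMap_globQ : IsClosedMap (globQ Z) := by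
  intro C hC
  have isClosed_end (e : unitInterval) :
      IsClosed {p : Z × unitInterval | p.2 = e ∧ ∃ c ∈ C, c.2 = e} :=
    (isClosed_eq continuous_snd continuous_const).inter isClosed_const
  rw [← isQuotientMap_globQ.isClosed_preimage, globQ_preimage_image]
  exact hC.union ((isClosed_end 0).union (isClosed_end 1))

variable {A : Set Z}

theorem globIncl_comp_globQ :
    globIncl Z A ∘ globQ A = globQ Z ∘ Prod.map Subtype.val id :=
  rfl

theorem continuous_globIncl : Continuous (globIncl Z A) := by
  rw [isQuotientMap_globQ.continuous_iff, globIncl_comp_globQ]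
  exact isQuotientMap_globQ.continuous.comp (continuous_subtype_val.prodMap continuous_id)

theorem globIncl_injective : Function.Injective (globIncl Z A) := by
  have prodMap_injective : Function.Injective
      (Prod.map Subtype.val id : A × unitInterval → Z × unitInterval) :=
    Subtype.val_injective.prodMap Function.injective_id
  refine isQuotientMap_globQ.surjective.forall₂.2 fun p r hpr => ?_
  change globQ Z (Prod.map Subtype.val id p) = globQ Z (Prod.map Subtype.val id r) at hpr
  rw [globQ_eq_globQ_iff_s8] at hpr ⊢
  exact hpr.imp_left fun h => prodMap_injective h

theorem isClosedMap_globIncl (hA : IsClosed A) : IsClosedMap (globIncl Z A) := by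
  have isClosedMap_prodMap : IsClosedMap
      (Prod.map Subtype.val id : A × unitInterval → Z × unitInterval) :=
    (hA.isClosedEmbedding_subtypeVal.prodMap .id).isClosedMap
  refine .of_comp_surjective isQuotientMap_globQ.surjective isQuotientMap_globQ.continuous ?_
  rw [globIncl_comp_globQ]
  exact isClosedMap_globQ.comp isClosedMap_prodMap

end Globe

/-- for a nonempty closed subspace `A ⊆ Z`, the induced continuous map
`Glob^top(A) → Glob^top(Z)` is a closed topological embedding. -/
theorem globIncl_isClosedEmbedding (Z : Type) [TopologicalSpace Z] (A : Set Z)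
    (hne : A.Nonempty) (hA : IsClosed A) :
    Topology.IsClosedEmbedding (globIncl Z A) :=
  .of_continuous_injective_isClosedMap continuous_globIncl globIncl_injective
    (isClosedMap_globIncl hA)
end
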